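/- For every positive integer n, the number of decompositions of n equals the number of odd divisors of n. -/

import Mathlib

/-- `IsDecomp n a m` means the `m` consecutive positive integers
`a+1, a+2, …, a+m` form a decomposition of `n`. -/
def IsDecomp (n a m : ℕ) : Prop :=
  1 ≤ m ∧ (Finset.range m).sum (fun i => a + i + 1) = n

/-!
Twice the sum of the run `a + 1, …, a + m` is `m * (2 * a + m + 1)`, a product of two factors of
opposite parity. Sending a run to the odd factor `d` and to half of the even factor, `c`, gives a
bijection from runs, empty ones included, to pairs of an odd number and a natural number. It is
inverted by noting that `m` is the smaller of `d` and `2 * c`, and `2 * a + m + 1` the larger. Since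
the sum of the run is `d * c`, the runs with sum `n > 0` correspond to the odd divisors `d` of `n`.
-/

/-- The odd one of the two factors `m` and `2 * a + m + 1`, where `p = (a, m)` encodes the run
`a + 1, …, a + m`. -/
def oddFactor (p : ℕ × ℕ) : ℕ :=
  if Odd p.2 then p.2 else 2 * p.1 + p.2 + 1

/-- Half of the even one of the two factors `m` and `2 * a + m + 1`, where `p = (a, m)` encodes the
run `a + 1, …, a + m`. -/
def halfEvenFactor (p : ℕ × ℕ) : ℕ :=
  if Odd p.2 then (2 * p.1 + p.2 + 1) / 2 else p.2 / 2

/-- The run `(a, m)` whose factors `m < 2 * a + m + 1` are `d` and `2 * c` in increasing order, for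
odd `d`. The difference of the factors is then `2 * a + 1`, so that its half rounds down to `a`. -/
def runOfFactors (d c : ℕ) : ℕ × ℕ :=
  ((max d (2 * c) - min d (2 * c)) / 2, min d (2 * c))

theorem odd_oddFactor (p : ℕ × ℕ) : Odd (oddFactor p) := by
  unfold oddFactor
  grind

theorem oddFactor_mul_two_mul_halfEvenFactor (p : ℕ × ℕ) :
    oddFactor p * (2 * halfEvenFactor p) = p.2 * (2 * p.1 + p.2 + 1) := by
  unfold oddFactor halfEvenFactor
  split_ifs with hodd
  · rw [Nat.two_mul_div_two_of_even (by grind)]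
  · rw [Nat.two_mul_div_two_of_even (Nat.not_odd_iff_even.mp hodd), mul_comm]

theorem runOfFactors_oddFactor_halfEvenFactor (p : ℕ × ℕ) :
    runOfFactors (oddFactor p) (halfEvenFactor p) = p := by
  have min_eq : min (oddFactor p) (2 * halfEvenFactor p) = p.2 := by
    unfold oddFactor halfEvenFactor
    grind
  have max_eq : max (oddFactor p) (2 * halfEvenFactor p) = 2 * p.1 + p.2 + 1 := by
    unfold oddFactor halfEvenFactor
    grind
  rw [runOfFactors, min_eq, max_eq]
  ext <;> grind

theorem oddFactor_runOfFactors {d : ℕ} (hd : Odd d) (c : ℕ) :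
    oddFactor (runOfFactors d c) = d := by
  unfold runOfFactors oddFactor
  rcases le_total d (2 * c) with hle | hle
  · simp [hle, hd]
  · simp only [min_eq_right hle, max_eq_left hle]
    grind

theorem halfEvenFactor_runOfFactors {d : ℕ} (hd : Odd d) (c : ℕ) :
    halfEvenFactor (runOfFactors d c) = c := by
  unfold runOfFactors halfEvenFactor
  rcases le_total d (2 * c) with hle | hle
  · simp only [min_eq_left hle, max_eq_right hle]
    grind
  · simp [hle]

theorem two_mul_sum_range_add_add_one (a m : ℕ) :
    2 * ∑ i ∈ Finset.range m, (a + i + 1) = m * (2 * a + m + 1) := by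
  induction m with
  | zero => simp
  | succ m ih => rw [Finset.sum_range_succ, mul_add, ih]; ring

theorem sum_range_add_add_one_eq_oddFactor_mul_halfEvenFactor (p : ℕ × ℕ) :
    ∑ i ∈ Finset.range p.2, (p.1 + i + 1) = oddFactor p * halfEvenFactor p := by
  refine Nat.eq_of_mul_eq_mul_left two_pos ?_
  rw [two_mul_sum_range_add_add_one, ← oddFactor_mul_two_mul_halfEvenFactor, mul_left_comm]

theorem isDecomp_iff_oddFactor_mul_halfEvenFactor {n : ℕ} (hn : 0 < n) (p : ℕ × ℕ) :
    IsDecomp n p.1 p.2 ↔ oddFactor p * halfEvenFactor p = n := by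
  rw [IsDecomp, sum_range_add_add_one_eq_oddFactor_mul_halfEvenFactor, and_iff_right_iff_imp]
  rintro rfl
  rw [Nat.one_le_iff_ne_zero]
  intro hm
  simp [halfEvenFactor, hm] at hn

theorem bijOn_oddFactor {n : ℕ} (hn : 0 < n) :
    Set.BijOn oddFactor {p | IsDecomp n p.1 p.2} {d | d ∣ n ∧ Odd d} := by
  simp only [isDecomp_iff_oddFactor_mul_halfEvenFactor hn]
  refine Set.InvOn.bijOn (f' := fun d => runOfFactors d (n / d)) ⟨?_, ?_⟩ ?_ ?_
  · rintro p rfl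
    simp only [Nat.mul_div_cancel_left _ (odd_oddFactor p).pos,
      runOfFactors_oddFactor_halfEvenFactor]
  · rintro d ⟨-, hd⟩
    exact oddFactor_runOfFactors hd _
  · intro p hp
    exact ⟨Dvd.intro _ hp, odd_oddFactor p⟩
  · rintro d ⟨hdvd, hd⟩
    simp only [Set.mem_ofPred_eq, oddFactor_runOfFactors hd, halfEvenFactor_runOfFactors hd,
      Nat.mul_div_cancel' hdvd]

/-- For every positive integer `n`, the number of decompositions of `n` equals
the number of odd divisors of `n`. -/
theorem card_decompositions_eq_card_odd_divisors (n : ℕ) (hn : 0 < n) :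
    {p : ℕ × ℕ | IsDecomp n p.1 p.2}.ncard = (n.divisors.filter (fun k => Odd k)).card := by
  have coe_odd_divisors :
      ((n.divisors.filter fun k => Odd k : Finset ℕ) : Set ℕ) = {d | d ∣ n ∧ Odd d} := by
    ext d
    simp [hn.ne']
  rw [← Set.ncard_coe_finset, coe_odd_divisors]
  exact (bijOn_oddFactor hn).ncard_eq
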